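/- arXiv:2503.16246 — 4 statements merged into one kernel-verified Lean document; each statement's English description precedes it below -/
import Mathlib

section
/- Define k(p) = −2·√((p + 1)/p) + log(1/2 + p + √(p² + p)) for p > 0. Then for all real numbers p, q with 1 ≤ q ≤ p, k(p) − k(q) ≤ 6·log(1 + p). -/
/-!
In the variable `u = log (1 + s)` the function `k` has derivative `((s + 1) / s) ^ (3 / 2)`, which
decreases in `s`. So `k` is concave in `u` and lies below its tangent line at `q`, whose slope is
at most `2 ^ (3 / 2) < 6` as soon as `q ≥ 1`.
-/

open Real Set

/-- The antiderivative `k` of `s ↦ √(s + 1) * s ^ (-3 / 2)` on `(0, ∞)`; its values at `s ≤ 0`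
are irrelevant. -/
noncomputable def heightPrimitive (s : ℝ) : ℝ :=
  -2 * √((s + 1) / s) + log (1 / 2 + s + √(s ^ 2 + s))

theorem sub_le_mul_sub_of_hasDerivAt_mul_of_antitoneOn {s : Set ℝ} (hs : s.OrdConnected)
    {f g φ g' : ℝ → ℝ} (hf : ∀ x ∈ s, HasDerivAt f (φ x * g' x) x)
    (hg : ∀ x ∈ s, HasDerivAt g (g' x) x) (hg' : ∀ x ∈ s, 0 ≤ g' x) (hφ : AntitoneOn φ s)
    {p q : ℝ} (hp : p ∈ s) (hq : q ∈ s) :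
    f p - f q ≤ φ q * (g p - g q) := by
  have hderiv : ∀ x ∈ s, HasDerivAt (fun y ↦ f y - φ q * g y) ((φ x - φ q) * g' x) x :=
    fun x hx ↦ ((hf x hx).sub ((hg x hx).const_mul (φ q))).congr_deriv (by ring)
  suffices f p - φ q * g p ≤ f q - φ q * g q by linarith
  rcases le_total q p with hqp | hpq
  · have hsub : Icc q p ⊆ s := hs.out hq hp
    refine antitoneOn_of_hasDerivWithinAt_nonpos (convex_Icc q p)
      (fun x hx ↦ (hderiv x (hsub hx)).continuousAt.continuousWithinAt)
      (fun x hx ↦ (hderiv x (hsub (interior_subset hx))).hasDerivWithinAt) (fun x hx ↦ ?_)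
      (left_mem_Icc.2 hqp) (right_mem_Icc.2 hqp) hqp
    have hx := interior_subset hx
    exact mul_nonpos_of_nonpos_of_nonneg (sub_nonpos.2 (hφ hq (hsub hx) hx.1)) (hg' x (hsub hx))
  · have hsub : Icc p q ⊆ s := hs.out hp hq
    refine monotoneOn_of_hasDerivWithinAt_nonneg (convex_Icc p q)
      (fun x hx ↦ (hderiv x (hsub hx)).continuousAt.continuousWithinAt)
      (fun x hx ↦ (hderiv x (hsub (interior_subset hx))).hasDerivWithinAt) (fun x hx ↦ ?_)
      (left_mem_Icc.2 hpq) (right_mem_Icc.2 hpq) hpq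
    have hx := interior_subset hx
    exact mul_nonneg (sub_nonneg.2 (hφ (hsub hx) hq hx.2)) (hg' x (hsub hx))

theorem hasDerivAt_log_add_sqrt_sq_add_const {c x : ℝ} (hpos : 0 < x ^ 2 + c)
    (hne : x + √(x ^ 2 + c) ≠ 0) :
    HasDerivAt (fun y ↦ log (y + √(y ^ 2 + c))) (√(x ^ 2 + c))⁻¹ x := by
  have hsqrt : √(x ^ 2 + c) ≠ 0 := (sqrt_pos.2 hpos).ne'
  refine (((hasDerivAt_id' x).add
    (((hasDerivAt_pow 2 x).add_const c).sqrt hpos.ne')).log hne).congr_deriv ?_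
  simp only [Nat.cast_ofNat, Nat.add_one_sub_one, pow_one, Pi.add_apply]
  field_simp
  ring

theorem hasDerivAt_sqrt_add_one_div_self {x : ℝ} (hx : 0 < x) :
    HasDerivAt (fun y ↦ √((y + 1) / y)) (-(2 * x ^ 2 * √((x + 1) / x))⁻¹) x := by
  have hdiv : HasDerivAt (fun y ↦ (y + 1) / y) (-(x ^ 2)⁻¹) x :=
    (((hasDerivAt_id' x).add_const 1).div (hasDerivAt_id' x) hx.ne').congr_deriv (by
      field_simp
      ring)
  refine (hdiv.sqrt (by positivity)).congr_deriv ?_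
  field_simp

theorem antitoneOn_sqrt_add_one_div_self_pow (n : ℕ) :
    AntitoneOn (fun x : ℝ ↦ √((x + 1) / x) ^ n) (Ioi 0) := by
  intro x hx y _ hxy
  have hx : 0 < x := hx
  have hy : 0 < y := hx.trans_le hxy
  have hratio : (y + 1) / y ≤ (x + 1) / x := by
    rw [div_le_div_iff₀ hy hx]
    linarith
  exact pow_le_pow_left₀ (sqrt_nonneg _) (sqrt_le_sqrt hratio) n

theorem sqrt_add_one_div_self_pow_three_le_six {x : ℝ} (hx : 1 ≤ x) :
    √((x + 1) / x) ^ 3 ≤ 6 := calc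
  √((x + 1) / x) ^ 3 ≤ √((1 + 1) / 1) ^ 3 :=
    antitoneOn_sqrt_add_one_div_self_pow 3 (mem_Ioi.2 one_pos) (one_pos.trans_le hx) hx
  _ ≤ (3 / 2) ^ 3 := by
    gcongr
    exact sqrt_le_iff.2 (by norm_num)
  _ ≤ 6 := by norm_num

theorem hasDerivAt_heightPrimitive {x : ℝ} (hx : 0 < x) :
    HasDerivAt heightPrimitive (√((x + 1) / x) ^ 3 * (1 + x)⁻¹) x := by
  have hsquare (y : ℝ) : (1 / 2 + y) ^ 2 + -(1 / 4) = y ^ 2 + y := by ring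
  have hlog : HasDerivAt (fun y ↦ log (1 / 2 + y + √(y ^ 2 + y))) (√(x ^ 2 + x))⁻¹ x := by
    have h := (hasDerivAt_log_add_sqrt_sq_add_const (c := -(1 / 4)) (x := 1 / 2 + x)
      (by rw [hsquare]; positivity) (by positivity)).comp_const_add (1 / 2) x
    simpa only [hsquare] using h
  refine (((hasDerivAt_sqrt_add_one_div_self hx).const_mul (-2)).add hlog).congr_deriv ?_
  have hsq : √((x + 1) / x) ^ 2 = (x + 1) / x := sq_sqrt (by positivity)
  have hroot : √(x ^ 2 + x) = x * √((x + 1) / x) := by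
    rw [sqrt_eq_iff_mul_self_eq_of_pos (by positivity), ← sq, mul_pow, hsq]
    field_simp
  have hpos : 0 < √((x + 1) / x) := by positivity
  rw [hroot]
  generalize √((x + 1) / x) = a at hsq hpos
  have hx1 : x + 1 = a ^ 2 * x := by rw [hsq]; field_simp
  rw [add_comm 1 x, hx1]
  field_simp
  linear_combination hx1

theorem stmt_11_general
    (k : ℝ → ℝ)
    (hk : ∀ p : ℝ, 0 < p →
      k p = -2 * √((p + 1) / p) + log (1 / 2 + p + √(p ^ 2 + p)))
    (q p : ℝ) (hq : 0 < q) (hp : 0 < p) :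
    k p - k q ≤ √((q + 1) / q) ^ 3 * (log (1 + p) - log (1 + q)) := by
  have hlog : ∀ x ∈ Ioi (0 : ℝ), HasDerivAt (fun y ↦ log (1 + y)) (1 + x)⁻¹ x :=
    fun x (hx : 0 < x) ↦ (hasDerivAt_log (by positivity)).comp_const_add 1 x
  rw [hk p hp, hk q hq]
  exact sub_le_mul_sub_of_hasDerivAt_mul_of_antitoneOn ordConnected_Ioi
    (fun _ ↦ hasDerivAt_heightPrimitive) hlog
    (fun x (hx : 0 < x) ↦ by positivity) (antitoneOn_sqrt_add_one_div_self_pow 3) hp hq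

/-- Inequality (3.18): with `k(p) = −2√((p+1)/p) + log(1/2 + p + √(p² + p))`,
for all `1 ≤ q ≤ p` one has `k(p) − k(q) ≤ 6 log(1 + p)`. -/
theorem stmt_11
    (k : ℝ → ℝ)
    (hk : ∀ p : ℝ, 0 < p →
      k p = -2 * Real.sqrt ((p + 1) / p) + Real.log (1 / 2 + p + Real.sqrt (p ^ 2 + p)))
    (q p : ℝ) (hq : 1 ≤ q) (hqp : q ≤ p) :
    k p - k q ≤ 6 * Real.log (1 + p) := by
  have hq0 : 0 < q := one_pos.trans_le hq
  calc k p - k q ≤ √((q + 1) / q) ^ 3 * (log (1 + p) - log (1 + q)) :=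
      stmt_11_general k hk q p hq0 (hq0.trans_le hqp)
    _ ≤ 6 * log (1 + p) :=
      mul_le_mul (sqrt_add_one_div_self_pow_three_le_six hq)
        (sub_le_self _ (log_nonneg (by linarith)))
        (sub_nonneg.2 (log_le_log (by positivity) (by linarith))) (by norm_num)
end

section
/- Let n ≥ 4 be a natural number and let p, q be real numbers with 1 ≤ q ≤ p. Then ∫_q^p (s + 1)^{1/(n−2)}·s^{−3/2} ds ≤ 6·log(1 + p). -/
/-!
The exponent `1 / (n - 2)` is at most `1 / 2` and `s + 1 ≥ 1`, so the integrand is at most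
`(s + 1) ^ (1 / 2) * s ^ (-3 / 2) = √(1 + 1 / s) * s⁻¹`. Instead of integrating this exactly, bound
the first factor by its value at the left endpoint `q`: the integral is at most
`√(1 + 1 / q) * log (p / q)`, and for `q ≥ 1` the square root is at most `√2 < 6`.
-/

lemma add_rpow_mul_rpow_le_mul_inv {a c q s : ℝ} (ha : 0 ≤ a) (hc : 0 ≤ c) (hq : 0 < q)
    (hqs : q ≤ s) : (s + c) ^ a * s ^ (-1 - a) ≤ (1 + c / q) ^ a * s⁻¹ := by
  have hs : 0 < s := hq.trans_le hqs
  calc (s + c) ^ a * s ^ (-1 - a)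
      = ((s + c) / s) ^ a * s⁻¹ := by
        rw [Real.div_rpow (by positivity) hs.le, Real.rpow_sub hs, Real.rpow_neg_one]
        ring
    _ = (1 + c / s) ^ a * s⁻¹ := by rw [add_div, div_self hs.ne']
    _ ≤ (1 + c / q) ^ a * s⁻¹ := by gcongr

lemma intervalIntegrable_add_rpow_mul_rpow {c p q : ℝ} (a b : ℝ) (hc : 0 ≤ c) (hq : 0 < q)
    (hp : 0 < p) :
    IntervalIntegrable (fun s : ℝ ↦ (s + c) ^ a * s ^ b) MeasureTheory.volume q p := by
  have hpos : ∀ s ∈ Set.uIcc q p, 0 < s := fun s hs ↦ (lt_min hq hp).trans_le hs.1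
  refine ContinuousOn.intervalIntegrable (ContinuousOn.mul ?_ ?_)
  · exact ContinuousOn.rpow_const (by fun_prop) fun s hs ↦
      Or.inl (add_pos_of_pos_of_nonneg (hpos s hs) hc).ne'
  · exact ContinuousOn.rpow_const (by fun_prop) fun s hs ↦ Or.inl (hpos s hs).ne'

lemma integral_add_rpow_mul_rpow_le {a c p q : ℝ} (ha : 0 ≤ a) (hc : 0 ≤ c) (hq : 0 < q)
    (hqp : q ≤ p) :
    ∫ s in q..p, (s + c) ^ a * s ^ (-1 - a) ≤ (1 + c / q) ^ a * Real.log (p / q) := by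
  have hp : 0 < p := hq.trans_le hqp
  calc ∫ s in q..p, (s + c) ^ a * s ^ (-1 - a)
      ≤ ∫ s in q..p, (1 + c / q) ^ a * s⁻¹ :=
        intervalIntegral.integral_mono_on hqp
          (intervalIntegrable_add_rpow_mul_rpow _ _ hc hq hp)
          ((intervalIntegrable_inv_iff.2
            (Or.inr (Set.notMem_uIcc_of_lt hq hp))).const_mul _)
          fun s hs ↦ add_rpow_mul_rpow_le_mul_inv ha hc hq hs.1
    _ = (1 + c / q) ^ a * Real.log (p / q) := by
        rw [intervalIntegral.integral_const_mul, integral_inv_of_pos hq hp]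

theorem stmt_12_general {a p q : ℝ} (ha : a ≤ 1 / 2) (hq : 0 < q) (hqp : q ≤ p) :
    ∫ s in q..p, (s + 1) ^ a * s ^ (-(3 : ℝ) / 2) ≤ √(1 + 1 / q) * Real.log (p / q) := by
  have hp : 0 < p := hq.trans_le hqp
  calc ∫ s in q..p, (s + 1) ^ a * s ^ (-(3 : ℝ) / 2)
      ≤ ∫ s in q..p, (s + 1) ^ (1 / 2 : ℝ) * s ^ (-(3 : ℝ) / 2) := by
        refine intervalIntegral.integral_mono_on hqp
          (intervalIntegrable_add_rpow_mul_rpow _ _ zero_le_one hq hp)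
          (intervalIntegrable_add_rpow_mul_rpow _ _ zero_le_one hq hp) fun s hs ↦ ?_
        have hs_pos : 0 < s := hq.trans_le hs.1
        gcongr
        linarith
    _ = ∫ s in q..p, (s + 1) ^ (1 / 2 : ℝ) * s ^ (-1 - 1 / 2 : ℝ) := by norm_num
    _ ≤ √(1 + 1 / q) * Real.log (p / q) := by
        rw [Real.sqrt_eq_rpow]
        exact integral_add_rpow_mul_rpow_le (by norm_num) zero_le_one hq hqp

lemma sqrt_one_add_one_div_mul_log_div_le {p q : ℝ} (hq : 1 ≤ q) (hqp : q ≤ p) :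
    √(1 + 1 / q) * Real.log (p / q) ≤ √2 * Real.log p := by
  have hp : 0 < p := by linarith
  have hinv : 1 / q ≤ 1 := (div_le_one₀ (by linarith)).2 hq
  have hlog : 0 ≤ Real.log (p / q) := Real.log_nonneg ((one_le_div₀ (by linarith)).2 hqp)
  have hdiv : p / q ≤ p := div_le_self hp.le hq
  gcongr
  linarith

lemma sqrt_two_mul_log_le {p : ℝ} (hp : 1 ≤ p) : √2 * Real.log p ≤ 6 * Real.log (1 + p) := by
  have hlog : 0 ≤ Real.log p := Real.log_nonneg hp
  gcongr
  · exact (Real.sqrt_le_left (by norm_num)).2 (by norm_num)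
  · linarith

/-- Combined steps (3.16)–(3.18): for `n ≥ 4` and `1 ≤ q ≤ p`,
`∫_q^p (s+1)^(1/(n−2)) s^(−3/2) ds ≤ 6 log(1 + p)`. -/
theorem stmt_12 (n : ℕ) (hn : 4 ≤ n) (q p : ℝ) (hq : 1 ≤ q) (hqp : q ≤ p) :
    (∫ s in q..p, (s + 1) ^ ((1 : ℝ) / ((n : ℝ) - 2)) * s ^ (-(3 : ℝ) / 2)) ≤
      6 * Real.log (1 + p) := by
  have hn_real : (4 : ℝ) ≤ n := by exact_mod_cast hn
  have hexp : (1 : ℝ) / ((n : ℝ) - 2) ≤ 1 / 2 :=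
    one_div_le_one_div_of_le two_pos (by linarith)
  exact (stmt_12_general hexp (by linarith) hqp).trans <|
    (sqrt_one_add_one_div_mul_log_div_le hq hqp).trans (sqrt_two_mul_log_le (hq.trans hqp))
end

section
/- Let n ≥ 2 be a natural number, let m, c, A > 0 and ξ ≥ 1 be real numbers, let h₀ ≤ h₁ be reals, and let Y : [h₀, h₁] → ℝ be a differentiable function such that for every h ∈ [h₀, h₁], setting p(h) := (c/(2m))·√(Y(h)/A) − 1, one has p(h) ≥ ξ and Y′(h) ≥ (4(n−1)·A·m/(3√3))·p(h)^{3/2}. Then h₁ − h₀ ≤ (6√6/((n−1)·c^{3/2}·A^{1/4}))·m^{1/2}·Y(h₁)^{1/4}. -/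
/-!
In terms of `p = k √(Y / A) - 1`, the inequality `Y' ≥ K p ^ (3/2)` becomes the separable
inequality `(p + 1) p ^ (-3/2) p' ≥ k² K / (2 A)`. A primitive of `(s + 1) s ^ (-3/2)` is
`2 √s - 2 / √s`, which is nonnegative for `s ≥ 1` and at most `2 √s`, so the length of the interval
is controlled by `√p ≤ √k (Y / A) ^ (1/4)` at its right end. The lower bound `p ≥ 1` propagates from
the left end, because `Y' > 0` whenever `Y` returns to its initial value.
-/

open Set Real

section RightDerivative

variable {f f' : ℝ → ℝ} {a b : ℝ}

theorem image_left_le_of_deriv_right_pos (hf : ContinuousOn f (Icc a b))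
    (hf' : ∀ x ∈ Ico a b, HasDerivWithinAt f (f' x) (Ici x) x)
    (hpos : ∀ x ∈ Ico a b, f x = f a → 0 < f' x) {x : ℝ} (hx : x ∈ Icc a b) : f a ≤ f x :=
  image_le_of_deriv_right_lt_deriv_boundary' (f := fun _ ↦ f a) (f' := fun _ ↦ 0)
    continuousOn_const (fun y _ ↦ hasDerivWithinAt_const y (Ici y) (f a)) le_rfl hf hf'
    (fun y hy heq ↦ hpos y hy heq.symm) hx

theorem mul_sub_le_image_sub_of_le_deriv_right {C : ℝ} (hab : a ≤ b)
    (hf : ContinuousOn f (Icc a b)) (hf' : ∀ x ∈ Ico a b, HasDerivWithinAt f (f' x) (Ici x) x)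
    (hC : ∀ x ∈ Ico a b, C ≤ f' x) : C * (b - a) ≤ f b - f a := by
  have hline (x : ℝ) : HasDerivAt (fun y ↦ C * (y - a) + f a) C x := by
    simpa using (((hasDerivAt_id x).sub_const a).const_mul C).add_const (f a)
  have hle : C * (b - a) + f a ≤ f b :=
    image_le_of_deriv_right_le_deriv_boundary
      (fun x _ ↦ (hline x).continuousAt.continuousWithinAt)
      (fun x _ ↦ (hline x).hasDerivWithinAt) (by simp) hf hf' hC (right_mem_Icc.mpr hab)
  linarith

end RightDerivative

/-- The primitive of `s ↦ (s + 1) * s ^ (-3/2)` on the positive half-line that vanishes at `1`; it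
separates the variables in the differential inequality for `p`. -/
noncomputable def sqrtPrimitive (x : ℝ) : ℝ := 2 * √x - 2 * (√x)⁻¹

theorem rpow_three_halves_eq_sqrt_pow {x : ℝ} (hx : 0 ≤ x) : x ^ (3 / 2 : ℝ) = √x ^ 3 := by
  rw [rpow_div_two_eq_sqrt 3 hx]
  exact rpow_natCast _ 3

theorem hasDerivAt_sqrtPrimitive {x : ℝ} (hx : 0 < x) :
    HasDerivAt sqrtPrimitive ((x + 1) / x ^ (3 / 2 : ℝ)) x := by
  have hsqrt : 0 < √x := sqrt_pos.mpr hx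
  have hderiv := hasDerivAt_sqrt hx.ne'
  refine ((hderiv.const_mul 2).sub ((hderiv.inv hsqrt.ne').const_mul 2)).congr_deriv ?_
  rw [rpow_three_halves_eq_sqrt_pow hx.le]
  field_simp
  rw [sq_sqrt hx.le]
  ring

theorem sqrtPrimitive_nonneg {x : ℝ} (hx : 1 ≤ x) : 0 ≤ sqrtPrimitive x := by
  have hsqrt : 1 ≤ √x := one_le_sqrt.mpr hx
  have hinv : (√x)⁻¹ ≤ 1 := inv_le_one_of_one_le₀ hsqrt
  unfold sqrtPrimitive
  linarith

theorem sqrtPrimitive_le_two_mul_sqrt (x : ℝ) : sqrtPrimitive x ≤ 2 * √x :=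
  sub_le_self _ (by positivity)

theorem mul_sub_le_two_mul_sqrt_of_separable {u u' : ℝ → ℝ} {a b C : ℝ} (hab : a ≤ b)
    (hu : ContinuousOn u (Icc a b)) (hu' : ∀ t ∈ Ico a b, HasDerivWithinAt u (u' t) (Ici t) t)
    (hpos : ∀ t ∈ Icc a b, 0 < u t) (ha : 1 ≤ u a)
    (hC : ∀ t ∈ Ico a b, C ≤ (u t + 1) / u t ^ (3 / 2 : ℝ) * u' t) :
    C * (b - a) ≤ 2 * √(u b) := by
  have hcont : ContinuousOn (sqrtPrimitive ∘ u) (Icc a b) := fun t ht ↦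
    (hasDerivAt_sqrtPrimitive (hpos t ht)).continuousAt.comp_continuousWithinAt (hu t ht)
  have hderiv (t) (ht : t ∈ Ico a b) :=
    (hasDerivAt_sqrtPrimitive (hpos t (Ico_subset_Icc_self ht))).comp_hasDerivWithinAt t (hu' t ht)
  calc C * (b - a) ≤ sqrtPrimitive (u b) - sqrtPrimitive (u a) :=
        mul_sub_le_image_sub_of_le_deriv_right hab hcont hderiv hC
    _ ≤ sqrtPrimitive (u b) := sub_le_self _ (sqrtPrimitive_nonneg ha)
    _ ≤ 2 * √(u b) := sqrtPrimitive_le_two_mul_sqrt _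

/-- The quantity `p` attached to a level-set volume `y`, with the constant `c / (2m)` of the height
bound abbreviated to `k`. -/
noncomputable def excess (k A y : ℝ) : ℝ := k * √(y / A) - 1

section Excess

variable {k A : ℝ}

theorem continuous_excess : Continuous (excess k A) := by
  unfold excess
  fun_prop

theorem monotone_excess (hk : 0 ≤ k) (hA : 0 ≤ A) : Monotone (excess k A) := by
  intro x y hxy
  unfold excess
  gcongr

theorem pos_of_excess_pos {y : ℝ} (hA : 0 < A) (hy : 0 < excess k A y) : 0 < y := by
  by_contra! hy_nonpos
  have hsqrt : √(y / A) = 0 :=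
    sqrt_eq_zero_of_nonpos (div_nonpos_of_nonpos_of_nonneg hy_nonpos hA.le)
  norm_num [excess, hsqrt] at hy

theorem hasDerivAt_excess {y : ℝ} (hA : 0 < A) (hy : 0 < excess k A y) :
    HasDerivAt (excess k A) (k ^ 2 / (2 * A * (excess k A y + 1))) y := by
  have hyA : 0 < y / A := div_pos (pos_of_excess_pos hA hy) hA
  refine (((((hasDerivAt_id y).div_const A).sqrt hyA.ne').const_mul k).sub_const 1).congr_deriv ?_
  have hk : k ≠ 0 := by
    rintro rfl
    norm_num [excess] at hy
  simp only [excess, sub_add_cancel, id_eq]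
  field_simp

theorem sqrt_excess_le (k : ℝ) {y : ℝ} (hyA : 0 ≤ y / A) :
    √(excess k A y) ≤ √k * (y / A) ^ (1 / 4 : ℝ) := by
  have hroot : √√(y / A) = (y / A) ^ (1 / 4 : ℝ) := by
    rw [sqrt_eq_rpow, sqrt_eq_rpow, ← rpow_mul hyA]
    norm_num
  rw [← hroot, ← sqrt_mul' k (sqrt_nonneg _)]
  exact sqrt_le_sqrt (sub_le_self _ zero_le_one)

variable {Y Y' : ℝ → ℝ} {a b K : ℝ}

theorem one_le_excess_of_le_deriv_right (hk : 0 ≤ k) (hA : 0 ≤ A) (hK : 0 < K)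
    (hY : ContinuousOn Y (Icc a b)) (hderiv : ∀ t ∈ Ico a b, HasDerivWithinAt Y (Y' t) (Ici t) t)
    (ha : 1 ≤ excess k A (Y a))
    (hY' : ∀ t ∈ Ico a b, 1 ≤ excess k A (Y t) → K * excess k A (Y t) ^ (3 / 2 : ℝ) ≤ Y' t)
    {t : ℝ} (ht : t ∈ Icc a b) : 1 ≤ excess k A (Y t) := by
  have hpos (x) (hx : x ∈ Ico a b) (heq : Y x = Y a) : 0 < Y' x := by
    have hp : 1 ≤ excess k A (Y x) := heq ▸ ha
    exact lt_of_lt_of_le (by positivity) (hY' x hx hp)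
  exact ha.trans (monotone_excess hk hA (image_left_le_of_deriv_right_pos hY hderiv hpos ht))

theorem mul_sub_le_two_mul_sqrt_excess (hab : a ≤ b) (hA : 0 < A)
    (hY : ContinuousOn Y (Icc a b)) (hderiv : ∀ t ∈ Ico a b, HasDerivWithinAt Y (Y' t) (Ici t) t)
    (hp : ∀ t ∈ Icc a b, 1 ≤ excess k A (Y t))
    (hY' : ∀ t ∈ Ico a b, K * excess k A (Y t) ^ (3 / 2 : ℝ) ≤ Y' t) :
    k ^ 2 * K / (2 * A) * (b - a) ≤ 2 * √(excess k A (Y b)) := by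
  have hpos (t) (ht : t ∈ Icc a b) : 0 < excess k A (Y t) := one_pos.trans_le (hp t ht)
  refine mul_sub_le_two_mul_sqrt_of_separable hab (continuous_excess.comp_continuousOn hY)
    (fun t ht ↦ (hasDerivAt_excess hA (hpos t (Ico_subset_Icc_self ht))).comp_hasDerivWithinAt t
      (hderiv t ht)) hpos (hp a (left_mem_Icc.mpr hab)) fun t ht ↦ ?_
  have hpt : 0 < excess k A (Y t) := hpos t (Ico_subset_Icc_self ht)
  have hrate : K ≤ Y' t / excess k A (Y t) ^ (3 / 2 : ℝ) :=
    (le_div_iff₀ (by positivity)).mpr (hY' t ht)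
  calc k ^ 2 * K / (2 * A)
      ≤ k ^ 2 * (Y' t / excess k A (Y t) ^ (3 / 2 : ℝ)) / (2 * A) := by gcongr
    _ = _ := by
      simp only [Function.comp_apply]
      field_simp

end Excess

theorem height_bound_constant_eq {m c A y : ℝ} (N : ℝ) (hm : 0 < m) (hc : 0 < c) (hA : 0 ≤ A)
    (hy : 0 ≤ y) :
    6 * √3 * m / (N * c ^ 2) * (2 * (√(c / (2 * m)) * (y / A) ^ (1 / 4 : ℝ))) =
      6 * √6 / (N * c ^ (3 / 2 : ℝ) * A ^ (1 / 4 : ℝ)) * m ^ (1 / 2 : ℝ) * y ^ (1 / 4 : ℝ) := by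
  have hc_sq : c ^ 2 = (√c ^ 2) ^ 2 := by rw [sq_sqrt hc.le]
  have hsix : √6 = √2 * √3 := by rw [← sqrt_mul zero_le_two]; norm_num
  rw [div_rpow hy hA, sqrt_div hc.le, sqrt_mul zero_le_two, rpow_three_halves_eq_sqrt_pow hc.le,
    ← sqrt_eq_rpow, hsix, hc_sq]
  field_simp
  rw [sq_sqrt zero_le_two, sq_sqrt hm.le]
  ring

theorem stmt_13_general {n m c A h₀ h₁ : ℝ} {Y Y' : ℝ → ℝ} (hn : 1 < n) (hm : 0 < m) (hc : 0 < c)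
    (hA : 0 < A) (hh : h₀ ≤ h₁) (hY : ContinuousOn Y (Icc h₀ h₁))
    (hderiv : ∀ h ∈ Ico h₀ h₁, HasDerivWithinAt Y (Y' h) (Ici h) h)
    (hp : 1 ≤ excess (c / (2 * m)) A (Y h₀))
    (hY' : ∀ h ∈ Ico h₀ h₁, 1 ≤ excess (c / (2 * m)) A (Y h) →
      4 * (n - 1) * A * m / (3 * √3) * excess (c / (2 * m)) A (Y h) ^ (3 / 2 : ℝ) ≤ Y' h) :
    h₁ - h₀ ≤ 6 * √6 / ((n - 1) * c ^ (3 / 2 : ℝ) * A ^ (1 / 4 : ℝ)) *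
      m ^ (1 / 2 : ℝ) * Y h₁ ^ (1 / 4 : ℝ) := by
  have hN : 0 < n - 1 := sub_pos.mpr hn
  have hp_ge (h) (h_mem : h ∈ Icc h₀ h₁) : 1 ≤ excess (c / (2 * m)) A (Y h) :=
    one_le_excess_of_le_deriv_right (by positivity) hA.le (by positivity) hY hderiv hp hY' h_mem
  have hY_pos : 0 < Y h₁ :=
    pos_of_excess_pos hA (one_pos.trans_le (hp_ge h₁ (right_mem_Icc.mpr hh)))
  have hbound := mul_sub_le_two_mul_sqrt_excess hh hA hY hderiv hp_ge
    fun h h_mem ↦ hY' h h_mem (hp_ge h (Ico_subset_Icc_self h_mem))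
  calc h₁ - h₀
      = 6 * √3 * m / ((n - 1) * c ^ 2) * ((c / (2 * m)) ^ 2 *
          (4 * (n - 1) * A * m / (3 * √3)) / (2 * A) * (h₁ - h₀)) := by field_simp; ring
    _ ≤ 6 * √3 * m / ((n - 1) * c ^ 2) * (2 * √(excess (c / (2 * m)) A (Y h₁))) := by gcongr
    _ ≤ 6 * √3 * m / ((n - 1) * c ^ 2) * (2 * (√(c / (2 * m)) * (Y h₁ / A) ^ (1 / 4 : ℝ))) := by
      gcongr
      exact sqrt_excess_le _ (by positivity)
    _ = _ := height_bound_constant_eq (n - 1) hm hc hA.le hY_pos.le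

/-- ODE-comparison core of the height-bound lemma (Lemma 3.2), case `n_ε = 1/2`:
if on `[h₀, h₁]` the function `Y` is differentiable with derivative `Y'`, and with
`p(h) := (c/(2m))√(Y(h)/A) − 1` one has `p(h) ≥ ξ ≥ 1` and
`Y'(h) ≥ (4(n−1)Am/(3√3)) p(h)^(3/2)`, then
`h₁ − h₀ ≤ (6√6/((n−1) c^(3/2) A^(1/4))) m^(1/2) Y(h₁)^(1/4)`. -/
theorem stmt_13 (n : ℕ) (hn : 2 ≤ n) (m c A ξ : ℝ)
    (hm : 0 < m) (hc : 0 < c) (hA : 0 < A) (hξ : 1 ≤ ξ)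
    (h₀ h₁ : ℝ) (hh : h₀ ≤ h₁) (Y Y' : ℝ → ℝ)
    (hderiv : ∀ h ∈ Set.Icc h₀ h₁, HasDerivAt Y (Y' h) h)
    (hp : ∀ h ∈ Set.Icc h₀ h₁, ξ ≤ c / (2 * m) * Real.sqrt (Y h / A) - 1)
    (hY' : ∀ h ∈ Set.Icc h₀ h₁,
      Y' h ≥ 4 * ((n : ℝ) - 1) * A * m / (3 * Real.sqrt 3) *
        (c / (2 * m) * Real.sqrt (Y h / A) - 1) ^ ((3 : ℝ) / 2)) :
    h₁ - h₀ ≤ 6 * Real.sqrt 6 / (((n : ℝ) - 1) * c ^ ((3 : ℝ) / 2) * A ^ ((1 : ℝ) / 4)) *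
      m ^ ((1 : ℝ) / 2) * (Y h₁) ^ ((1 : ℝ) / 4) :=
  stmt_13_general (by exact_mod_cast hn) hm hc hA hh (HasDerivAt.continuousOn hderiv)
    (fun h h_mem ↦ (hderiv h (Set.Ico_subset_Icc_self h_mem)).hasDerivWithinAt)
    (hξ.trans (hp h₀ (Set.left_mem_Icc.mpr hh)))
    fun h h_mem _ ↦ hY' h (Set.Ico_subset_Icc_self h_mem)
end

section
/- Let n ≥ 4 be a natural number, let m, c, A > 0 and ξ ≥ 1 be real numbers, let h₀ ≤ h₁ be reals, and let Y : [h₀, h₁] → ℝ be a differentiable function such that for every h ∈ [h₀, h₁], setting p(h) := (c/(2m))·(Y(h)/A)^{(n−2)/(n−1)} − 1, one has p(h) ≥ ξ and Y′(h) ≥ (4(n−1)·A·m/(3√3))·p(h)^{3/2}. Then h₁ − h₀ ≤ (9√3·2^{1/(n−2)}/((n−2)·c^{(n−1)/(n−2)}))·m^{1/(n−2)}·log(1 + p(h₁)). -/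
/-!
Put `u = Y / A`, `q = (n - 2) / (n - 1)` and `κ = c / (2m)`, so that `p + 1 = κ u ^ q`. Inverting
this relation, `κ ^ (1 / q) u = (p + 1) ^ (1 / q)`, and since `1 / q = 1 + 1 / (n - 2) ≤ 3 / 2` and
`p ≥ 1`, the right-hand side is at most `(2 p) ^ (3 / 2)`. Hence the differential inequality bounds
the logarithmic derivative of `u` below by a positive constant, and `log (κ u ^ q)`, which is
nonnegative at `h₀`, grows at least linearly.
-/

section Rpow

variable {x q r κ : ℝ}

-- For `x < 0`, `Real.rpow` is `|x| ^ q * cos (q * π)`, whose cosine is nonpositive for these `q`.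
theorem pos_of_rpow_pos (hq : 1 / 2 ≤ q) (hq' : q ≤ 3 / 2) (hx : 0 < x ^ q) : 0 < x := by
  contrapose! hx
  rcases hx.lt_or_eq with hneg | rfl
  · rw [Real.rpow_def_of_neg hneg]
    refine mul_nonpos_of_nonneg_of_nonpos (Real.exp_pos _).le
      (Real.cos_nonpos_of_pi_div_two_le_of_le ?_ ?_) <;>
      nlinarith [Real.pi_pos]
  · exact (Real.zero_rpow (by linarith)).le

theorem rpow_le_two_rpow_mul_sub_one_rpow (hqr : q ≤ r) (hr : 0 ≤ r) (hx : 2 ≤ x) :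
    x ^ q ≤ 2 ^ r * (x - 1) ^ r := by
  calc x ^ q ≤ x ^ r := Real.rpow_le_rpow_of_exponent_le (by linarith) hqr
    _ ≤ (2 * (x - 1)) ^ r := Real.rpow_le_rpow (by linarith) (by linarith) hr
    _ = 2 ^ r * (x - 1) ^ r := Real.mul_rpow (by norm_num) (by linarith)

theorem mul_rpow_rpow_inv (hκ : 0 ≤ κ) (hx : 0 ≤ x) (hq : q ≠ 0) :
    (κ * x ^ q) ^ q⁻¹ = κ ^ q⁻¹ * x := by
  rw [Real.mul_rpow hκ (Real.rpow_nonneg hx q), Real.rpow_rpow_inv hx hq]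

theorem mul_log_div_le_log_mul_rpow {y : ℝ} (hκ : 0 < κ) (hx : 0 < x) (hy : 0 < y)
    (hκx : 1 ≤ κ * x ^ q) : q * Real.log (y / x) ≤ Real.log (κ * y ^ q) := by
  have log_mul_rpow {z : ℝ} (hz : 0 < z) :
      Real.log (κ * z ^ q) = Real.log κ + q * Real.log z := by
    rw [Real.log_mul hκ.ne' (Real.rpow_pos_of_pos hz q).ne', Real.log_rpow hz]
  have hlog := Real.log_nonneg hκx
  rw [log_mul_rpow hx] at hlog
  rw [log_mul_rpow hy, Real.log_div hy.ne' hx.ne']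
  linarith

end Rpow

section DifferentialInequality

variable {u u' : ℝ → ℝ} {h₀ h₁ : ℝ}

theorem mul_sub_le_log_div_of_mul_le_deriv {k : ℝ} (hh : h₀ ≤ h₁)
    (hderiv : ∀ h ∈ Set.Icc h₀ h₁, HasDerivWithinAt u (u' h) (Set.Icc h₀ h₁) h)
    (hpos : ∀ h ∈ Set.Icc h₀ h₁, 0 < u h)
    (hgrowth : ∀ h ∈ Set.Icc h₀ h₁, k * u h ≤ u' h) :
    k * (h₁ - h₀) ≤ Real.log (u h₁ / u h₀) := by
  have hleft := Set.left_mem_Icc.2 hh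
  have hright := Set.right_mem_Icc.2 hh
  have hlog : ∀ h ∈ Set.Icc h₀ h₁,
      HasDerivWithinAt (fun x => Real.log (u x)) (u' h / u h) (Set.Icc h₀ h₁) h :=
    fun h hmem => (hderiv h hmem).log (hpos h hmem).ne'
  have hlog_interior : ∀ h ∈ interior (Set.Icc h₀ h₁),
      HasDerivAt (fun x => Real.log (u x)) (u' h / u h) h :=
    fun h hmem => (hlog h (interior_subset hmem)).hasDerivAt (mem_interior_iff_mem_nhds.1 hmem)
  rw [Real.log_div (hpos h₁ hright).ne' (hpos h₀ hleft).ne']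
  refine (convex_Icc h₀ h₁).mul_sub_le_image_sub_of_le_deriv
    (fun h hmem => (hlog h hmem).continuousWithinAt)
    (fun h hmem => (hlog_interior h hmem).differentiableAt.differentiableWithinAt)
    (fun h hmem => ?_) h₀ hleft h₁ hright hh
  rw [(hlog_interior h hmem).deriv, le_div_iff₀ (hpos h (interior_subset hmem))]
  exact hgrowth h (interior_subset hmem)

theorem sub_le_mul_log_of_mul_rpow_le_deriv {b κ q r : ℝ} (hb : 0 < b) (hκ : 0 < κ) (hq : 0 < q)
    (hqr : q⁻¹ ≤ r) (hh : h₀ ≤ h₁)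
    (hderiv : ∀ h ∈ Set.Icc h₀ h₁, HasDerivWithinAt u (u' h) (Set.Icc h₀ h₁) h)
    (hpos : ∀ h ∈ Set.Icc h₀ h₁, 0 < u h)
    (htwo : ∀ h ∈ Set.Icc h₀ h₁, 2 ≤ κ * u h ^ q)
    (hu' : ∀ h ∈ Set.Icc h₀ h₁, b * (κ * u h ^ q - 1) ^ r ≤ u' h) :
    h₁ - h₀ ≤ 2 ^ r / (q * b * κ ^ q⁻¹) * Real.log (κ * u h₁ ^ q) := by
  have hleft := Set.left_mem_Icc.2 hh
  have hright := Set.right_mem_Icc.2 hh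
  have hr : 0 ≤ r := (inv_pos.2 hq).le.trans hqr
  have hgrowth : ∀ h ∈ Set.Icc h₀ h₁, b * κ ^ q⁻¹ / 2 ^ r * u h ≤ u' h := by
    intro h hmem
    have hinv : κ ^ q⁻¹ * u h ≤ 2 ^ r * (κ * u h ^ q - 1) ^ r := by
      rw [← mul_rpow_rpow_inv hκ.le (hpos h hmem).le hq.ne']
      exact rpow_le_two_rpow_mul_sub_one_rpow hqr hr (htwo h hmem)
    calc b * κ ^ q⁻¹ / 2 ^ r * u h = b / 2 ^ r * (κ ^ q⁻¹ * u h) := by ring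
      _ ≤ b / 2 ^ r * (2 ^ r * (κ * u h ^ q - 1) ^ r) := by gcongr
      _ = b * (κ * u h ^ q - 1) ^ r := by field_simp
      _ ≤ u' h := hu' h hmem
  have hlinear : q * (b * κ ^ q⁻¹ / 2 ^ r * (h₁ - h₀)) ≤ Real.log (κ * u h₁ ^ q) :=
    (mul_le_mul_of_nonneg_left
      (mul_sub_le_log_div_of_mul_le_deriv hh hderiv hpos hgrowth) hq.le).trans
      (mul_log_div_le_log_mul_rpow hκ (hpos h₀ hleft) (hpos h₁ hright)
        (by linarith [htwo h₀ hleft]))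
  calc h₁ - h₀
      = 2 ^ r / (q * b * κ ^ q⁻¹) * (q * (b * κ ^ q⁻¹ / 2 ^ r * (h₁ - h₀))) := by field_simp
    _ ≤ 2 ^ r / (q * b * κ ^ q⁻¹) * Real.log (κ * u h₁ ^ q) := by gcongr

end DifferentialInequality

section HeightBound

variable {ν m c : ℝ}

theorem two_rpow_three_halves_le_six : (2 : ℝ) ^ ((3 : ℝ) / 2) ≤ 6 :=
  calc (2 : ℝ) ^ ((3 : ℝ) / 2) ≤ 2 ^ (2 : ℝ) :=
        Real.rpow_le_rpow_of_exponent_le (by norm_num) (by norm_num)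
    _ ≤ 6 := by norm_num

theorem height_bound_coefficient_le (hν : 2 < ν) (hm : 0 < m) (hc : 0 < c) :
    2 ^ ((3 : ℝ) / 2) / ((ν - 2) / (ν - 1) * (4 * (ν - 1) * m / (3 * Real.sqrt 3)) *
        (c / (2 * m)) ^ ((ν - 2) / (ν - 1))⁻¹) ≤
      9 * Real.sqrt 3 * (2 : ℝ) ^ (1 / (ν - 2)) / ((ν - 2) * c ^ ((ν - 1) / (ν - 2))) *
        m ^ (1 / (ν - 2)) := by
  have hν₁ : 0 < ν - 1 := by linarith
  have hν₂ : 0 < ν - 2 := by linarith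
  have hexp : (ν - 1) / (ν - 2) = 1 + 1 / (ν - 2) := by field_simp; ring
  have hpow : (c / (2 * m)) ^ ((ν - 2) / (ν - 1))⁻¹ =
      c ^ ((ν - 1) / (ν - 2)) / (2 * m * (2 ^ (1 / (ν - 2)) * m ^ (1 / (ν - 2)))) := by
    rw [inv_div, Real.div_rpow hc.le (by positivity), hexp,
      Real.rpow_one_add' (x := 2 * m) (by positivity) (by positivity),
      Real.mul_rpow (by norm_num) hm.le]
  rw [hpow]
  calc 2 ^ ((3 : ℝ) / 2) / ((ν - 2) / (ν - 1) * (4 * (ν - 1) * m / (3 * Real.sqrt 3)) *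
        (c ^ ((ν - 1) / (ν - 2)) / (2 * m * (2 ^ (1 / (ν - 2)) * m ^ (1 / (ν - 2))))))
      = 2 ^ ((3 : ℝ) / 2) * (3 * Real.sqrt 3 * 2 ^ (1 / (ν - 2)) /
          (2 * (ν - 2) * c ^ ((ν - 1) / (ν - 2))) * m ^ (1 / (ν - 2))) := by
        field_simp
        ring
    _ ≤ 6 * (3 * Real.sqrt 3 * 2 ^ (1 / (ν - 2)) /
          (2 * (ν - 2) * c ^ ((ν - 1) / (ν - 2))) * m ^ (1 / (ν - 2))) := by
        gcongr
        exact two_rpow_three_halves_le_six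
    _ = 9 * Real.sqrt 3 * (2 : ℝ) ^ (1 / (ν - 2)) / ((ν - 2) * c ^ ((ν - 1) / (ν - 2))) *
          m ^ (1 / (ν - 2)) := by
        field_simp
        ring

theorem stmt_14_general {A : ℝ} {h₀ h₁ : ℝ} {Y Y' : ℝ → ℝ} (hν : 4 ≤ ν)
    (hm : 0 < m) (hc : 0 < c) (hA : 0 < A) (hh : h₀ ≤ h₁)
    (hderiv : ∀ h ∈ Set.Icc h₀ h₁, HasDerivWithinAt Y (Y' h) (Set.Icc h₀ h₁) h)
    (hp : ∀ h ∈ Set.Icc h₀ h₁, 1 ≤ c / (2 * m) * (Y h / A) ^ ((ν - 2) / (ν - 1)) - 1)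
    (hY' : ∀ h ∈ Set.Icc h₀ h₁,
      Y' h ≥ 4 * (ν - 1) * A * m / (3 * Real.sqrt 3) *
        (c / (2 * m) * (Y h / A) ^ ((ν - 2) / (ν - 1)) - 1) ^ ((3 : ℝ) / 2)) :
    h₁ - h₀ ≤
      9 * Real.sqrt 3 * (2 : ℝ) ^ (1 / (ν - 2)) / ((ν - 2) * c ^ ((ν - 1) / (ν - 2))) *
        m ^ (1 / (ν - 2)) *
        Real.log (1 + (c / (2 * m) * (Y h₁ / A) ^ ((ν - 2) / (ν - 1)) - 1)) := by
  have hν₁ : 0 < ν - 1 := by linarith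
  have hν₂ : 0 < ν - 2 := by linarith
  have hκ : 0 < c / (2 * m) := by positivity
  have htwo : ∀ h ∈ Set.Icc h₀ h₁, 2 ≤ c / (2 * m) * (Y h / A) ^ ((ν - 2) / (ν - 1)) :=
    fun h hmem => by linarith [hp h hmem]
  have hpos : ∀ h ∈ Set.Icc h₀ h₁, 0 < Y h / A := fun h hmem =>
    pos_of_rpow_pos (by rw [div_le_div_iff₀ two_pos hν₁]; linarith)
      (by rw [div_le_div_iff₀ hν₁ two_pos]; linarith)
      (pos_of_mul_pos_right (two_pos.trans_le (htwo h hmem)) hκ.le)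
  rw [add_sub_cancel]
  refine (sub_le_mul_log_of_mul_rpow_le_deriv (u := fun h => Y h / A) (r := 3 / 2)
    (b := 4 * (ν - 1) * m / (3 * Real.sqrt 3)) (by positivity) hκ (div_pos hν₂ hν₁) ?_ hh
    (fun h hmem => (hderiv h hmem).div_const A) hpos htwo fun h hmem => ?_).trans ?_
  · rw [inv_div, div_le_div_iff₀ hν₂ two_pos]
    linarith
  · rw [le_div_iff₀ hA]
    exact (hY' h hmem).le.trans_eq' (by ring)
  · have hlog := Real.log_nonneg (one_le_two.trans (htwo h₁ (Set.right_mem_Icc.2 hh)))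
    exact mul_le_mul_of_nonneg_right (height_bound_coefficient_le (by linarith) hm hc) hlog

end HeightBound

/-- ODE-comparison core of the height-bound lemma (Lemma 3.2), case
`n_ε = (n−2)/(n−1)` for `n ≥ 4`: if on `[h₀, h₁]` the function `Y` is differentiable
with derivative `Y'`, and with `p(h) := (c/(2m))(Y(h)/A)^((n−2)/(n−1)) − 1` one has
`p(h) ≥ ξ ≥ 1` and `Y'(h) ≥ (4(n−1)Am/(3√3)) p(h)^(3/2)`, then
`h₁ − h₀ ≤ (9√3 · 2^(1/(n−2)) / ((n−2) c^((n−1)/(n−2)))) m^(1/(n−2)) log(1 + p(h₁))`. -/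
theorem stmt_14 (n : ℕ) (hn : 4 ≤ n) (m c A ξ : ℝ)
    (hm : 0 < m) (hc : 0 < c) (hA : 0 < A) (hξ : 1 ≤ ξ)
    (h₀ h₁ : ℝ) (hh : h₀ ≤ h₁) (Y Y' : ℝ → ℝ)
    (hderiv : ∀ h ∈ Set.Icc h₀ h₁, HasDerivAt Y (Y' h) h)
    (hp : ∀ h ∈ Set.Icc h₀ h₁,
      ξ ≤ c / (2 * m) * (Y h / A) ^ (((n : ℝ) - 2) / ((n : ℝ) - 1)) - 1)
    (hY' : ∀ h ∈ Set.Icc h₀ h₁,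
      Y' h ≥ 4 * ((n : ℝ) - 1) * A * m / (3 * Real.sqrt 3) *
        (c / (2 * m) * (Y h / A) ^ (((n : ℝ) - 2) / ((n : ℝ) - 1)) - 1) ^ ((3 : ℝ) / 2)) :
    h₁ - h₀ ≤
      9 * Real.sqrt 3 * (2 : ℝ) ^ ((1 : ℝ) / ((n : ℝ) - 2)) /
          (((n : ℝ) - 2) * c ^ (((n : ℝ) - 1) / ((n : ℝ) - 2))) *
        m ^ ((1 : ℝ) / ((n : ℝ) - 2)) *
        Real.log (1 + (c / (2 * m) * (Y h₁ / A) ^ (((n : ℝ) - 2) / ((n : ℝ) - 1)) - 1)) := by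
  exact stmt_14_general (by exact_mod_cast hn) hm hc hA hh
    (fun h hmem => (hderiv h hmem).hasDerivWithinAt) (fun h hmem => hξ.trans (hp h hmem)) hY'
end
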